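/- Let block(∞) be the one-sided infinite word of a simple Toeplitz subshift defined by coding sequences (a_k) and (n_k). Then for every prefix v of block(∞), liminf_{L→∞} (|v|/L)·#̃_v(block(∞)(1)⋯block(∞)(L)) ≥ 1/8; in particular, block(∞) satisfies condition (PQ). -/

import Mathlib

open Filter Topology MeasureTheory

noncomputable section

abbrev SL2 := Matrix.SpecialLinearGroup (Fin 2) ℝ

/-- Operator norm of a 2×2 real matrix acting on Euclidean ℝ². -/
def matNorm (M : Matrix (Fin 2) (Fin 2) ℝ) : ℝ :=
  ‖LinearMap.toContinuousLinearMap (Matrix.toEuclideanLin M)‖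

/-- Norm of an element of SL(2,ℝ). -/
def slNorm (M : SL2) : ℝ := matNorm (M : Matrix (Fin 2) (Fin 2) ℝ)

/-- Action of an SL(2,ℝ) matrix on a euclidean vector. -/
def slAct (M : SL2) (v : EuclideanSpace ℝ (Fin 2)) : EuclideanSpace ℝ (Fin 2) :=
  Matrix.toEuclideanLin (M : Matrix (Fin 2) (Fin 2) ℝ) v

variable {𝒜 : Type*}

/-- The shift by `k` on two-sided sequences; `shift 1` is the left shift `T`. -/
def shift (k : ℤ) (ω : ℤ → 𝒜) : ℤ → 𝒜 := fun n => ω (n + k)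

/-- `Ω ⊆ 𝒜^ℤ` is a subshift: nonempty, closed, invariant under the shift and its inverse. -/
structure IsSubshift [TopologicalSpace 𝒜] (Ω : Set (ℤ → 𝒜)) : Prop where
  nonempty : Ω.Nonempty
  closed : IsClosed Ω
  shift_mem : ∀ ω ∈ Ω, shift 1 ω ∈ Ω
  shift_neg_mem : ∀ ω ∈ Ω, shift (-1) ω ∈ Ω

/-- The word `ω(k) ω(k+1) ⋯ ω(k+n-1)`. -/
def word (ω : ℤ → 𝒜) (k : ℤ) (n : ℕ) : List 𝒜 := (List.range n).map fun i => ω (k + i)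

/-- `v` occurs in `ω` at position `k`. -/
def occursAt (v : List 𝒜) (ω : ℤ → 𝒜) (k : ℤ) : Prop := v = word ω k v.length

/-- The words of length `n` occurring in elements of `Ω`. -/
def WordsN (Ω : Set (ℤ → 𝒜)) (n : ℕ) : Set (List 𝒜) :=
  {v | ∃ ω ∈ Ω, ∃ k : ℤ, v = word ω k n}

/-- The (nonempty) finite words occurring in elements of `Ω`. -/
def Words (Ω : Set (ℤ → 𝒜)) : Set (List 𝒜) :=
  {v | 1 ≤ v.length ∧ v ∈ WordsN Ω v.length}

/-- `A` is locally constant on `Ω`: its value depends only on a finite window around 0. -/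
def LocConstOn (Ω : Set (ℤ → 𝒜)) {β : Type*} (A : (ℤ → 𝒜) → β) : Prop :=
  ∃ N : ℕ, ∀ ω ∈ Ω, ∀ ρ ∈ Ω, (∀ i : ℤ, |i| ≤ (N : ℤ) → ω i = ρ i) → A ω = A ρ

/-- The positive part of the cocycle: `cocycleP A n ω = A(T^{n-1}ω) ⋯ A(ω)`. -/
def cocycleP (A : (ℤ → 𝒜) → SL2) : ℕ → (ℤ → 𝒜) → SL2
  | 0, _ => 1
  | n + 1, ω => A (shift n ω) * cocycleP A n ω

/-- The full cocycle over the shift, `n ∈ ℤ`. -/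
def cocycle (A : (ℤ → 𝒜) → SL2) (n : ℤ) (ω : ℤ → 𝒜) : SL2 :=
  if 0 ≤ n then cocycleP A n.toNat ω else (cocycleP A (-n).toNat (shift n ω))⁻¹

/-- `A` is uniform on `Ω`: `(1/n) log‖A(n,ω)‖` converges uniformly on `Ω`. -/
def IsUniform (Ω : Set (ℤ → 𝒜)) (A : (ℤ → 𝒜) → SL2) : Prop :=
  ∃ Λ : ℝ, TendstoUniformlyOn
    (fun (n : ℕ) (ω : ℤ → 𝒜) => Real.log (slNorm (cocycle A n ω)) / n)
    (fun _ => Λ) atTop Ω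

/-- The number of occurrences of `v` in `ω(1)⋯ω(n)`. -/
def occCount (v : List 𝒜) (ω : ℤ → 𝒜) (n : ℕ) : ℕ :=
  Set.ncard {k : ℤ | 1 ≤ k ∧ k + v.length ≤ (n : ℤ) + 1 ∧ occursAt v ω k}

/-- Uniform existence of word frequencies (unique ergodicity). -/
def UniformWordFreq (Ω : Set (ℤ → 𝒜)) : Prop :=
  ∀ v ∈ Words Ω, ∃ ν : ℝ, TendstoUniformlyOn
    (fun (n : ℕ) (ω : ℤ → 𝒜) => (occCount v ω n : ℝ) / n) (fun _ => ν) atTop Ω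

/-- Minimality: every orbit is dense in `Ω`. -/
def IsMinimalSubshift [TopologicalSpace 𝒜] (Ω : Set (ℤ → 𝒜)) : Prop :=
  ∀ ω ∈ Ω, ∀ ρ ∈ Ω, ρ ∈ closure {σ : ℤ → 𝒜 | ∃ k : ℤ, σ = shift k ω}

/-- Condition (α): for all large `n`, the words of length `n` of `Ω` are exactly the
words `lead j (-k+1) ⋯ lead j (-k+n)`, `0 ≤ k ≤ n`, of the leading words. -/
def CondAlpha (Ω : Set (ℤ → 𝒜)) {r : ℕ} (lead : Fin r → (ℤ → 𝒜)) : Prop :=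
  (∀ j, lead j ∈ Ω) ∧ ∃ N : ℕ, ∀ n : ℕ, N ≤ n →
    WordsN Ω n = {v | ∃ j : Fin r, ∃ k : ℕ, k ≤ n ∧ v = word (lead j) (1 - (k : ℤ)) n}

/-- Condition (β): for every locally constant cocycle the Lyapunov limits along the
leading words exist in both time directions and all have the same value. -/
def CondBeta (Ω : Set (ℤ → 𝒜)) {r : ℕ} (lead : Fin r → (ℤ → 𝒜)) : Prop :=
  ∀ A : (ℤ → 𝒜) → SL2, LocConstOn Ω A → ∃ Λ : ℝ, ∀ j : Fin r,
    Tendsto (fun n : ℕ => Real.log (slNorm (cocycle A n (lead j))) / n) atTop (𝓝 Λ) ∧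
    Tendsto (fun n : ℕ => Real.log (slNorm (cocycle A (-(n : ℤ)) (lead j))) / n) atTop (𝓝 Λ)

/-- Condition (γ): along the leading words, for every locally constant cocycle and every
nonzero vector, at most one of the two one-sided exponents is negative. -/
def CondGamma (Ω : Set (ℤ → 𝒜)) {r : ℕ} (lead : Fin r → (ℤ → 𝒜)) : Prop :=
  ∀ A : (ℤ → 𝒜) → SL2, LocConstOn Ω A → ∀ j : Fin r,
    ∀ v : EuclideanSpace ℝ (Fin 2), v ≠ 0 →
    ¬ (limsup (fun n : ℕ => Real.log ‖slAct (cocycle A n (lead j)) v‖ / n) atTop < 0 ∧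
       limsup (fun n : ℕ => Real.log ‖slAct (cocycle A (-(n : ℤ)) (lead j)) v‖ / n) atTop < 0)

/-- The leading sequence condition (LSC). -/
def SatisfiesLSC (Ω : Set (ℤ → 𝒜)) : Prop :=
  ∃ (r : ℕ) (lead : Fin r → (ℤ → 𝒜)), CondAlpha Ω lead ∧ CondBeta Ω lead ∧ CondGamma Ω lead

/-- `F` is subadditive on the words of `Ω`. -/
def SubadditiveOn (Ω : Set (ℤ → 𝒜)) (F : List 𝒜 → ℝ) : Prop :=
  ∀ x y : List 𝒜, x ∈ Words Ω → y ∈ Words Ω → (x ++ y) ∈ Words Ω → F (x ++ y) ≤ F x + F y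

/-- `Fb` is the asymptotic mean `lim_n max { F x / n : x ∈ W(Ω)_n }` of `F`. -/
def IsAsympMean (Ω : Set (ℤ → 𝒜)) (F : List 𝒜 → ℝ) (Fb : ℝ) : Prop :=
  Tendsto (fun n : ℕ => sSup ((fun x => F x / n) '' WordsN Ω n)) atTop (𝓝 Fb)

/-- Maximal number of pairwise disjoint occurrences of `v` in `ω(1)⋯ω(n)`. -/
def disjCount (v : List 𝒜) (ω : ℤ → 𝒜) (n : ℕ) : ℕ :=
  sSup {m : ℕ | ∃ S : Finset ℤ, S.card = m ∧
    (∀ k ∈ S, 1 ≤ k ∧ k + v.length ≤ (n : ℤ) + 1 ∧ occursAt v ω k) ∧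
    (∀ k ∈ S, ∀ l ∈ S, k ≠ l → (v.length : ℤ) ≤ |k - l|)}

/-- Condition (PQ) for the one-sided word `p(1)p(2)⋯`. -/
def CondPQ (p : ℤ → 𝒜) : Prop :=
  ∃ c : ℝ, 0 < c ∧ ∀ m : ℕ, 1 ≤ m →
    c ≤ liminf (fun n : ℕ => (m : ℝ) / n * disjCount (word p 1 m) p n) atTop

/-- ℓ²(ℤ) over the reals. -/
abbrev Ell2Z : Type := lp (fun _ : ℤ => ℝ) 2

/-- `H` acts as the Jacobi operator with coefficients `f, g` at `ω`. -/
def IsJacobiAt (f g : (ℤ → 𝒜) → ℝ) (ω : ℤ → 𝒜) (H : Ell2Z →L[ℝ] Ell2Z) : Prop :=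
  ∀ u : Ell2Z, ∀ n : ℤ,
    (H u : ∀ _ : ℤ, ℝ) n =
      f (shift n ω) * (u : ∀ _ : ℤ, ℝ) (n - 1) + f (shift (n + 1) ω) * (u : ∀ _ : ℤ, ℝ) (n + 1)
        + g (shift n ω) * (u : ∀ _ : ℤ, ℝ) n

/-- The pair `(f,g)` is periodic on `Ω`. -/
def PeriodicPair (Ω : Set (ℤ → 𝒜)) (f g : (ℤ → 𝒜) → ℝ) : Prop :=
  ∃ P : ℕ, 1 ≤ P ∧ ∀ ω ∈ Ω, f (shift (P : ℤ) ω) = f ω ∧ g (shift (P : ℤ) ω) = g ω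

/-- `S ⊆ ℝ` is a Cantor set of Lebesgue measure zero: compact, empty interior,
no isolated points, Lebesgue measure zero. -/
def IsMeasureZeroCantor (S : Set ℝ) : Prop :=
  IsCompact S ∧ interior S = ∅ ∧ Perfect S ∧ volume S = 0

/-- `n` copies of `x` separated by `n-1` copies of the letter `l`. -/
def sepJoin (x : List 𝒜) (l : 𝒜) (m : ℕ) : List 𝒜 :=
  (List.replicate (m - 1) (x ++ [l])).flatten ++ x

/-- `Blk a nseq (k+1)` is the block `block(k)` of the simple Toeplitz construction
(with `Blk a nseq 0 = block(-1) = ε`). -/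
def Blk (a : ℕ → 𝒜) (nseq : ℕ → ℕ) : ℕ → List 𝒜
  | 0 => []
  | k + 1 => sepJoin (Blk a nseq k) (a k) (nseq k)

/-- `p(1)p(2)⋯` is the one-sided word `block(∞)`: every block is a prefix of it. -/
def IsBlockInf (a : ℕ → 𝒜) (nseq : ℕ → ℕ) (p : ℤ → 𝒜) : Prop :=
  ∀ k : ℕ, word p 1 (Blk a nseq k).length = Blk a nseq k

/-- The simple Toeplitz subshift generated by `block(∞) = p(1)p(2)⋯`: all two-sided
sequences whose finite subwords all occur in `block(∞)`. -/
def toeplitzΩ (p : ℤ → 𝒜) : Set (ℤ → 𝒜) :=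
  {ω | ∀ (i : ℤ) (n : ℕ), ∃ l : ℤ, 1 ≤ l ∧ word ω i n = word p l n}

/-- The eventual alphabet: letters occurring infinitely often in `(a_k)`. -/
def EvAlph (a : ℕ → 𝒜) : Set 𝒜 := {x | ∀ K : ℕ, ∃ k, K ≤ k ∧ a k = x}

/-- The leading word `p^R v | p`: equals `p(n+1)` for `n ≥ 0`, carries the word `v` on
positions `-|v|, …, -1`, and equals `p(-(n+|v|))` for `n < -|v|`. -/
def leadWordGen (p : ℤ → 𝒜) (v : List 𝒜) : ℤ → 𝒜 := fun n =>
  if 0 ≤ n then p (n + 1)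
  else if -(v.length : ℤ) ≤ n then v.getD (n + v.length).toNat (p 1)
  else p (-(n + v.length))

/-- The Gauss map. -/
def gaussMap (x : ℝ) : ℝ := 1 / x - ⌊1 / x⌋

/-- `cfSeq α n` is the continued fraction coefficient `a_{n+1}` of `α`. -/
def cfSeq (α : ℝ) (n : ℕ) : ℕ := ⌊1 / (gaussMap^[n] α)⌋₊

/-- The standard Sturmian words: `sturmW α (n+1) = s_n`, `sturmW α 0 = s_{-1} = 1`,
`sturmW α 1 = s_0 = 0`, `s_1 = s_0^{a_1 - 1} s_{-1}`, `s_n = s_{n-1}^{a_n} s_{n-2}`. -/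
def sturmW (α : ℝ) : ℕ → List (Fin 2)
  | 0 => [1]
  | 1 => [0]
  | 2 => List.replicate (cfSeq α 0 - 1) (0 : Fin 2) ++ [1]
  | n + 3 => (List.replicate (cfSeq α (n + 1)) (sturmW α (n + 2))).flatten ++ sturmW α (n + 1)

/-- The Sturmian subshift with rotation number `α`: all two-sided sequences whose finite
subwords occur in some `s_n`. -/
def sturmΩ (α : ℝ) : Set (ℤ → Fin 2) :=
  {ω | ∀ (i : ℤ) (n : ℕ), ∃ m : ℕ, word ω i n <:+: sturmW α m}

/-- The positive cocycle of a map `A` over a transformation `T`: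
`cocycleH T A n ω = A(T^{n-1}ω) ⋯ A(ω)`. -/
def cocycleH {Ω : Type*} (T : Ω → Ω) (A : Ω → SL2) : ℕ → Ω → SL2
  | 0, _ => 1
  | n + 1, ω => A (T^[n] ω) * cocycleH T A n ω

end

/-! A prefix `v` of `block(∞)` with `q k ≤ |v| < q (k + 1)`, where `q k = |block(k - 1)| + 1`,
recurs with bounded gaps. Indeed `p x = a k` whenever `k` is the largest index with `q k ∣ x`, so
`v` occurs right after every multiple of `q k` from which a word of length `|v|` reaches no
multiple of `q (k + 1)`. Within every `q k + |v| ≤ 2 |v|` consecutive positions there is such a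
multiple, so each window of length `3 |v|` contains an occurrence of `v`. Occurrences in
consecutive windows are disjoint, which gives the lower bound `1 / 3`. -/

section Words

variable {𝒜 : Type*}

@[simp]
lemma length_word (ω : ℤ → 𝒜) (k : ℤ) (n : ℕ) : (word ω k n).length = n := by
  simp [word]

-- In the definition of `word` the index `i` elaborates to an integer, and the range is cast to a
-- list of integers through the monad structure of `List`.
lemma word_eq_map (ω : ℤ → 𝒜) (k : ℤ) (n : ℕ) :
    word ω k n = (List.range n).map fun i : ℕ => ω (k + i) := by
  simp only [word, bind_pure_comp, List.map_eq_map, List.map_map]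
  rfl

lemma getElem?_word (ω : ℤ → 𝒜) (k : ℤ) {n i : ℕ} (hi : i < n) :
    (word ω k n)[i]? = some (ω (k + i)) := by
  simp [word_eq_map, hi]

lemma occursAt_word_iff {ω : ℤ → 𝒜} {j k : ℤ} {n : ℕ} :
    occursAt (word ω j n) ω k ↔ ∀ i < n, ω (j + i) = ω (k + i) := by
  simp [occursAt, word_eq_map]

lemma sepJoin_one (x : List 𝒜) (l : 𝒜) : sepJoin x l 1 = x := by
  simp [sepJoin]

lemma sepJoin_add_two (x : List 𝒜) (l : 𝒜) (m : ℕ) :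
    sepJoin x l (m + 2) = (x ++ [l]) ++ sepJoin x l (m + 1) := by
  simp [sepJoin, List.replicate_succ]

lemma length_sepJoin_add_one (x : List 𝒜) (l : 𝒜) (m : ℕ) :
    (sepJoin x l (m + 1)).length + 1 = (m + 1) * (x.length + 1) := by
  simp only [sepJoin, Nat.add_sub_cancel, List.length_append, List.length_flatten,
    List.map_replicate, List.sum_replicate, List.length_singleton, smul_eq_mul]
  ring

lemma getElem?_sepJoin (x : List 𝒜) (l : 𝒜) {m i : ℕ} (hi : i + 1 < m * (x.length + 1)) :
    (sepJoin x l m)[i]? = (x ++ [l])[i % (x.length + 1)]? := by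
  induction m generalizing i with
  | zero => omega
  | succ m ih =>
    rcases m with - | m
    · have hlt : i < x.length := by omega
      rw [sepJoin_one, Nat.mod_eq_of_lt (by omega), List.getElem?_append_left hlt]
    rw [sepJoin_add_two]
    rcases lt_or_ge i (x.length + 1) with hlt | hge
    · rw [Nat.mod_eq_of_lt hlt, List.getElem?_append_left (by simpa using hlt)]
    · have hi' : i - (x.length + 1) + 1 < (m + 1) * (x.length + 1) := by
        rw [add_mul (m + 1)] at hi
        omega
      rw [List.getElem?_append_right (by simpa using hge), Nat.mod_eq_sub_mod hge, ← ih hi']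
      simp

end Words

section BlockPeriod

/-- The number `q k = n 0 ⋯ n (k - 1)`: one more than the length of `Blk a n k`, and the distance
between consecutive copies of that block in `block(∞)`. -/
def blockPeriod (n : ℕ → ℕ) (k : ℕ) : ℕ := ∏ i ∈ Finset.range k, n i

variable {n : ℕ → ℕ}

lemma blockPeriod_zero : blockPeriod n 0 = 1 := Finset.prod_range_zero n

lemma blockPeriod_succ (k : ℕ) : blockPeriod n (k + 1) = n k * blockPeriod n k :=
  Finset.prod_range_succ_comm n k

lemma blockPeriod_dvd_blockPeriod {k l : ℕ} (h : k ≤ l) : blockPeriod n k ∣ blockPeriod n l :=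
  Finset.prod_dvd_prod_of_subset _ _ _ (Finset.range_mono h)

lemma blockPeriod_strictMono (hn : ∀ k, 2 ≤ n k) : StrictMono (blockPeriod n) := by
  refine strictMono_nat_of_lt_succ fun k => ?_
  have hpos : 0 < blockPeriod n k := Finset.prod_pos fun i _ => by linarith [hn i]
  rw [blockPeriod_succ]
  nlinarith [hn k]

lemma exists_blockPeriod_le_lt (hn : ∀ k, 2 ≤ n k) {m : ℕ} (hm : 1 ≤ m) :
    ∃ k, blockPeriod n k ≤ m ∧ m < blockPeriod n (k + 1) := by
  have hmono := blockPeriod_strictMono hn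
  have hcover := iUnion_Ico_map_succ_eq_Ici (fun k => hmono.monotone (Nat.zero_le k))
    hmono.not_bddAbove_range_of_isSuccArchimedean
  have hmem : m ∈ Set.Ici (blockPeriod n ⊥) := by
    simpa only [bot_eq_zero, blockPeriod_zero, Set.mem_Ici] using hm
  rw [← hcover] at hmem
  simpa only [Set.mem_iUnion, Set.mem_Ico, Order.succ_eq_add_one] using hmem

lemma exists_blockPeriod_dvd_not_dvd {k x : ℕ} (h : ¬ blockPeriod n (k + 1) ∣ x) :
    ∃ l ≤ k, blockPeriod n l ∣ x ∧ ¬ blockPeriod n (l + 1) ∣ x := by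
  induction k with
  | zero => exact ⟨0, le_rfl, by simp [blockPeriod_zero], h⟩
  | succ k ih =>
    by_cases hdvd : blockPeriod n (k + 1) ∣ x
    · exact ⟨k + 1, le_rfl, hdvd, h⟩
    · obtain ⟨l, hl, hx⟩ := ih hdvd
      exact ⟨l, by omega, hx⟩

end BlockPeriod

section Toeplitz

variable {𝒜 : Type*} {a : ℕ → 𝒜} {n : ℕ → ℕ} {p : ℤ → 𝒜}

lemma length_Blk_add_one (hn : ∀ k, 0 < n k) (k : ℕ) :
    (Blk a n k).length + 1 = blockPeriod n k := by
  induction k with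
  | zero => simp [Blk, blockPeriod_zero]
  | succ k ih =>
    obtain ⟨m, hm⟩ := Nat.exists_eq_succ_of_ne_zero (hn k).ne'
    rw [blockPeriod_succ, ← ih, Blk, hm, length_sepJoin_add_one]

lemma getElem?_Blk (hn : ∀ k, 0 < n k) {i k l : ℕ} (hi : i + 1 < blockPeriod n k)
    (hdvd : blockPeriod n l ∣ i + 1) (hndvd : ¬ blockPeriod n (l + 1) ∣ i + 1) :
    (Blk a n k)[i]? = some (a l) := by
  induction k generalizing i with
  | zero => simp [blockPeriod_zero] at hi
  | succ k ih =>
    have hlen : (Blk a n k).length + 1 = blockPeriod n k := length_Blk_add_one hn k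
    rw [Blk, getElem?_sepJoin _ _ (by rwa [hlen, ← blockPeriod_succ]), hlen]
    by_cases hk : blockPeriod n k ∣ i + 1
    · have hlk : l = k := by
        refine le_antisymm (not_lt.1 fun hlt => ?_) (not_lt.1 fun hlt => ?_)
        · exact absurd ((blockPeriod_dvd_blockPeriod hlt).trans hdvd)
            (Nat.not_dvd_of_pos_of_lt i.succ_pos hi)
        · exact hndvd ((blockPeriod_dvd_blockPeriod hlt).trans hk)
      have hmod : i % blockPeriod n k = (Blk a n k).length := by
        rw [← hlen] at hk ⊢
        exact Nat.succ_mod_succ_eq_zero_iff.1 (Nat.mod_eq_zero_of_dvd hk)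
      simp [hmod, hlk]
    · have hlk : l < k := not_le.1 fun hle => hk ((blockPeriod_dvd_blockPeriod hle).trans hdvd)
      have hlt : i % blockPeriod n k + 1 < blockPeriod n k := by
        refine lt_of_le_of_ne (Nat.mod_lt i (by omega)) fun heq => hk ?_
        rw [Nat.dvd_iff_mod_eq_zero, ← Nat.mod_add_mod, heq, Nat.mod_self]
      have hmod : i % blockPeriod n k + 1 = (i + 1) % blockPeriod n k := by
        rw [← Nat.mod_add_mod, Nat.mod_eq_of_lt hlt]
      rw [List.getElem?_append_left (by omega)]
      refine ih hlt ?_ ?_ <;> rw [hmod]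
      · rwa [Nat.dvd_mod_iff (blockPeriod_dvd_blockPeriod hlk.le)]
      · rwa [Nat.dvd_mod_iff (blockPeriod_dvd_blockPeriod hlk)]

lemma IsBlockInf.apply_eq (hp : IsBlockInf a n p) (hn : ∀ k, 2 ≤ n k) {x l : ℕ}
    (hdvd : blockPeriod n l ∣ x) (hndvd : ¬ blockPeriod n (l + 1) ∣ x) : p x = a l := by
  have hpos : ∀ k, 0 < n k := fun k => two_pos.trans_le (hn k)
  obtain ⟨i, rfl⟩ : ∃ i, x = i + 1 :=
    Nat.exists_eq_succ_of_ne_zero fun h => hndvd (h ▸ dvd_zero _)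
  have hi : i + 1 < blockPeriod n (i + 2) := (blockPeriod_strictMono hn).le_apply
  have hlen := length_Blk_add_one (a := a) hpos (i + 2)
  have hletter := getElem?_Blk (a := a) hpos hi hdvd hndvd
  rw [← hp (i + 2), getElem?_word _ _ (by omega)] at hletter
  simpa [add_comm] using hletter

lemma IsBlockInf.apply_add_eq (hp : IsBlockInf a n p) (hn : ∀ k, 2 ≤ n k) {k x i : ℕ}
    (hx : blockPeriod n k ∣ x) (hi : ¬ blockPeriod n (k + 1) ∣ i)
    (hxi : ¬ blockPeriod n (k + 1) ∣ x + i) : p (x + i : ℕ) = p i := by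
  obtain ⟨l, hlk, hdvd, hndvd⟩ := exists_blockPeriod_dvd_not_dvd hi
  have hdvd_add : blockPeriod n l ∣ x + i :=
    ((blockPeriod_dvd_blockPeriod hlk).trans hx).add hdvd
  have hndvd_add : ¬ blockPeriod n (l + 1) ∣ x + i := by
    rcases hlk.eq_or_lt with rfl | hlt
    · exact hxi
    · rwa [Nat.dvd_add_right ((blockPeriod_dvd_blockPeriod hlt).trans hx)]
  rw [hp.apply_eq hn hdvd_add hndvd_add, hp.apply_eq hn hdvd hndvd]

lemma IsBlockInf.occursAt_prefix (hp : IsBlockInf a n p) (hn : ∀ k, 2 ≤ n k) {k x m : ℕ}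
    (hx : blockPeriod n k ∣ x) (hm : x % blockPeriod n (k + 1) + m < blockPeriod n (k + 1)) :
    occursAt (word p 1 m) p (x + 1) := by
  rw [occursAt_word_iff]
  intro i hi
  have hprefix : ¬ blockPeriod n (k + 1) ∣ i + 1 := Nat.not_dvd_of_pos_of_lt i.succ_pos (by omega)
  have hshift : ¬ blockPeriod n (k + 1) ∣ x + (i + 1) := by
    rw [Nat.dvd_iff_mod_eq_zero, ← Nat.mod_add_mod, Nat.mod_eq_of_lt (by omega)]
    omega
  have hletter := hp.apply_add_eq hn hx hprefix hshift
  push_cast at hletter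
  rw [add_comm 1 (i : ℤ), ← hletter]
  congr 1
  ring

end Toeplitz

section Gaps

lemma exists_dvd_mod_add_lt {q Q m : ℕ} (hqQ : q ∣ Q) (hm : m < Q) (y : ℕ) :
    ∃ x, q ∣ x ∧ x % Q + m < Q ∧ y ≤ x ∧ x < y + (q + m) := by
  have hq : 0 < q := Nat.pos_of_dvd_of_pos hqQ (by omega)
  obtain ⟨x, hdvd, hyx, hxy⟩ : ∃ x, q ∣ x ∧ y ≤ x ∧ x < y + q := by
    have hlt := Nat.lt_mul_div_succ (y + q - 1) hq
    have hle := Nat.mul_div_le (y + q - 1) q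
    rw [mul_add] at hlt
    exact ⟨q * ((y + q - 1) / q), dvd_mul_right _ _, by omega, by omega⟩
  by_cases hfit : x % Q + m < Q
  · exact ⟨x, hdvd, hfit, hyx, by omega⟩
  · have hnext : Q * (x / Q + 1) = x + Q - x % Q := by
      have := Nat.div_add_mod x Q
      rw [mul_add]
      omega
    have hlt : x % Q < Q := Nat.mod_lt x (by omega)
    exact ⟨Q * (x / Q + 1), hqQ.mul_right _, by simpa using hm, by omega, by omega⟩

lemma IsBlockInf.exists_occursAt_prefix {𝒜 : Type*} {a : ℕ → 𝒜} {n : ℕ → ℕ} {p : ℤ → 𝒜}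
    (hp : IsBlockInf a n p) (hn : ∀ k, 2 ≤ n k) {m : ℕ} (hm : 1 ≤ m) (y : ℕ) :
    ∃ x : ℕ, y ≤ x ∧ x < y + 2 * m ∧ occursAt (word p 1 m) p (x + 1) := by
  obtain ⟨k, hkm, hmk⟩ := exists_blockPeriod_le_lt hn hm
  obtain ⟨x, hdvd, hfit, hyx, hxy⟩ :=
    exists_dvd_mod_add_lt (blockPeriod_dvd_blockPeriod k.le_succ) hmk y
  exact ⟨x, hyx, by omega, hp.occursAt_prefix hn hdvd hfit⟩

end Gaps

section DisjCount

variable {𝒜 : Type*} {v : List 𝒜} {ω : ℤ → 𝒜}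

/-- `S` consists of the starting positions of pairwise disjoint occurrences of `v` in
`ω(1)⋯ω(L)`; `disjCount v ω L` is the largest cardinality of such an `S`. -/
def IsDisjOccurrences (v : List 𝒜) (ω : ℤ → 𝒜) (L : ℕ) (S : Finset ℤ) : Prop :=
  (∀ k ∈ S, 1 ≤ k ∧ k + v.length ≤ (L : ℤ) + 1 ∧ occursAt v ω k) ∧
    ∀ k ∈ S, ∀ l ∈ S, k ≠ l → (v.length : ℤ) ≤ |k - l|

lemma IsDisjOccurrences.card_le {L : ℕ} {S : Finset ℤ} (hS : IsDisjOccurrences v ω L S)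
    (hv : v ≠ []) : S.card ≤ L := by
  have hlen := List.length_pos_iff.2 hv
  have hsub : S ⊆ Finset.Icc (1 : ℤ) L := fun k hk => by
    obtain ⟨hk1, hkL, -⟩ := hS.1 k hk
    exact Finset.mem_Icc.2 ⟨hk1, by omega⟩
  simpa using Finset.card_le_card hsub

lemma disjCount_le (hv : v ≠ []) (L : ℕ) : disjCount v ω L ≤ L :=
  csSup_le' fun _ ⟨_, hcard, hS⟩ => hcard ▸ IsDisjOccurrences.card_le hS hv

lemma IsDisjOccurrences.card_le_disjCount {L : ℕ} {S : Finset ℤ}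
    (hS : IsDisjOccurrences v ω L S) (hv : v ≠ []) : S.card ≤ disjCount v ω L :=
  le_csSup ⟨L, fun _ ⟨_, hcard, hT⟩ => hcard ▸ IsDisjOccurrences.card_le hT hv⟩ ⟨S, rfl, hS⟩

lemma div_le_disjCount (hv : v ≠ []) {d : ℕ}
    (hocc : ∀ y : ℕ, ∃ x : ℕ, y ≤ x ∧ x < y + d ∧ occursAt v ω (x + 1)) (L : ℕ) :
    L / (d + v.length) ≤ disjCount v ω L := by
  have hlen := List.length_pos_iff.2 hv
  choose f hle hlt hf using hocc
  obtain ⟨D, hD⟩ : ∃ D, D = d + v.length := ⟨_, rfl⟩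
  rw [← hD]
  let g : ℕ → ℤ := fun t => f (t * D) + 1
  have hg (t : ℕ) : g t = f (t * D) + 1 := rfl
  have hstep {s t : ℕ} (hst : s < t) : g s + v.length ≤ g t := by
    have hwindow : (s + 1) * D ≤ t * D := Nat.mul_le_mul_right D hst
    have hs := hlt (s * D)
    have ht := hle (t * D)
    rw [add_mul] at hwindow
    rw [hg, hg]
    omega
  have hmono : StrictMono g := fun s t hst => by linarith [hstep hst]
  have hdisj : IsDisjOccurrences v ω L ((Finset.range (L / D)).image g) := by
    simp only [IsDisjOccurrences, Finset.forall_mem_image, Finset.mem_range]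
    refine ⟨fun t ht => ⟨by rw [hg]; omega, ?_, hf _⟩, fun s _ t _ hne => ?_⟩
    · have hwindow : (t + 1) * D ≤ L := (Nat.mul_le_mul_right D ht).trans (Nat.div_mul_le_self L D)
      have ht := hlt (t * D)
      rw [add_mul] at hwindow
      rw [hg]
      omega
    · rcases lt_trichotomy s t with hst | rfl | hts
      · rw [abs_sub_comm]
        exact (le_sub_iff_add_le'.2 (hstep hst)).trans (le_abs_self _)
      · exact absurd rfl hne
      · exact (le_sub_iff_add_le'.2 (hstep hts)).trans (le_abs_self _)
  simpa [Finset.card_image_of_injective _ hmono.injective] using hdisj.card_le_disjCount hv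

end DisjCount

section Liminf

lemma tendsto_nat_div_div_atTop (D : ℕ) :
    Tendsto (fun L : ℕ => ((L / D : ℕ) : ℝ) / L) atTop (𝓝 (D : ℝ)⁻¹) := by
  refine ((tendsto_nat_floor_mul_div_atTop (inv_nonneg.2 D.cast_nonneg)).comp
    (tendsto_natCast_atTop_atTop (R := ℝ))).congr fun L => ?_
  simp only [Function.comp_apply]
  rw [inv_mul_eq_div, Nat.floor_div_eq_div]

lemma div_le_liminf_disjCount {𝒜 : Type*} {v : List 𝒜} {ω : ℤ → 𝒜} (hv : v ≠ []) {d : ℕ}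
    (hocc : ∀ y : ℕ, ∃ x : ℕ, y ≤ x ∧ x < y + d ∧ occursAt v ω (x + 1)) :
    (v.length : ℝ) / (d + v.length : ℕ) ≤
      liminf (fun L : ℕ => (v.length : ℝ) / L * disjCount v ω L) atTop := by
  have hlim : Tendsto (fun L : ℕ => (v.length : ℝ) / L * (L / (d + v.length) : ℕ)) atTop
      (𝓝 ((v.length : ℝ) / (d + v.length : ℕ))) := by
    simpa only [← mul_div_assoc, ← div_mul_eq_mul_div, ← div_eq_mul_inv] using
      (tendsto_nat_div_div_atTop (d + v.length)).const_mul (v.length : ℝ)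
  have hbdd (L : ℕ) : (v.length : ℝ) / L * disjCount v ω L ≤ v.length :=
    calc (v.length : ℝ) / L * disjCount v ω L ≤ v.length / L * L := by
          gcongr
          exact disjCount_le hv L
      _ ≤ v.length := by
          rw [div_mul_eq_mul_div]
          exact div_le_of_le_mul₀ L.cast_nonneg v.length.cast_nonneg le_rfl
  rw [← hlim.liminf_eq]
  refine liminf_le_liminf (.of_forall fun L => ?_) hlim.isBoundedUnder_ge
    (isBoundedUnder_of ⟨_, hbdd⟩).isCoboundedUnder_ge
  gcongr
  exact div_le_disjCount hv hocc L

end Liminf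

theorem statement15_general {𝒜 : Type*} (a : ℕ → 𝒜) (nseq : ℕ → ℕ) (hn : ∀ k, 2 ≤ nseq k)
    (p : ℤ → 𝒜) (hp : IsBlockInf a nseq p) :
    (∀ m : ℕ, 1 ≤ m →
      (1 : ℝ) / 3 ≤ liminf (fun L : ℕ => (m : ℝ) / L * disjCount (word p 1 m) p L) atTop) ∧
    CondPQ p := by
  have hthird (m : ℕ) (hm : 1 ≤ m) :
      (1 : ℝ) / 3 ≤ liminf (fun L : ℕ => (m : ℝ) / L * disjCount (word p 1 m) p L) atTop := by
    have hne : word p 1 m ≠ [] := List.length_pos_iff.1 (by rwa [length_word])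
    have hbound := div_le_liminf_disjCount hne (hp.exists_occursAt_prefix hn hm)
    have hratio : (m : ℝ) / (2 * m + m : ℕ) = 1 / 3 := by
      have : (m : ℝ) ≠ 0 := by positivity
      push_cast
      field_simp
      norm_num
    rwa [length_word, hratio] at hbound
  exact ⟨hthird, 1 / 3, by norm_num, hthird⟩

/-- **Validity of (PQ).** For every prefix `v` of `block(∞)`,
`liminf_L (|v|/L)·#̃_v(block(∞)(1)⋯block(∞)(L)) ≥ 1/8`; in particular `block(∞)`
satisfies condition (PQ). -/
theorem statement15 {𝒜 : Type*} [Fintype 𝒜]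
    (a : ℕ → 𝒜) (nseq : ℕ → ℕ) (ha : ∀ k, a (k + 1) ≠ a k) (hn : ∀ k, 2 ≤ nseq k)
    (p : ℤ → 𝒜) (hp : IsBlockInf a nseq p) :
    (∀ m : ℕ, 1 ≤ m →
      (1 : ℝ) / 8 ≤ Filter.liminf
        (fun L : ℕ => (m : ℝ) / L * disjCount (word p 1 m) p L) Filter.atTop) ∧
    CondPQ p := by
  obtain ⟨hthird, hPQ⟩ := statement15_general a nseq hn p hp
  exact ⟨fun m hm => le_trans (by norm_num) (hthird m hm), hPQ⟩
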